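/- There is an absolute constant C > 0 such that for every integer n ≥ 2, every ε ∈ (0, 1/2), and every positive definite Hankel matrix H ∈ ℝ^{n×n}, if k is any integer with C·(ln n)·ln(1/ε) ≤ k ≤ n, then the best rank-k approximation H_k of H satisfies ‖H − H_k‖_F ≤ ε‖H‖_F. -/

import Mathlib

open scoped BigOperators

/-- A matrix is Hankel if its entries depend only on the sum of the indices. -/
def IsHankel {n : ℕ} (A : Matrix (Fin n) (Fin n) ℝ) : Prop :=
  ∀ i j k l : Fin n, (i : ℕ) + (j : ℕ) = (k : ℕ) + (l : ℕ) → A i j = A k l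

/-- Euclidean (ℓ₂) norm of a vector. -/
noncomputable def euclNorm {n : ℕ} (x : Fin n → ℝ) : ℝ := Real.sqrt (∑ i, x i ^ 2)

/-- Spectral norm of a matrix: supremum of ‖Ax‖₂ over the Euclidean unit ball. -/
noncomputable def specNorm {n : ℕ} (A : Matrix (Fin n) (Fin n) ℝ) : ℝ :=
  ⨆ x : {x : Fin n → ℝ // euclNorm x ≤ 1}, euclNorm (A.mulVec x.1)

/-- Frobenius norm of a matrix. -/
noncomputable def froNorm {n : ℕ} (A : Matrix (Fin n) (Fin n) ℝ) : ℝ :=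
  Real.sqrt (∑ i, ∑ j, (A i j) ^ 2)

/-!
A positive definite Hankel matrix is the moment matrix `H = Vᵀ W V` of a discrete positive measure:
factor `H = Gᵀ G` so that the shifted matrix `(h (i + j + 1))` becomes `Gᵀ D G` with `D` diagonal;
then `D` maps each column of `G` to the next one, so `G` is a row-scaled Vandermonde matrix.

The substitutions `x ↦ -x` and `x ↦ x⁻¹` of the nodes amount to orthogonal congruences of `H`, so
after splitting the measure into four parts the nodes lie in `[0, 1]`. With `D = diag x` and `S` the
shift, `V - D V S` has rank one. The matrix `b - S` with `b = 1 - 1 / (2 n²)` is accretive because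
`S` is a contraction with `Sⁿ = 0`, so for `t > 0` its Cayley transform
`C = (b - S - t) (b - S + t)⁻¹` is a contraction, and `V - τ(D) V C` still has rank one, where `τ`
is the corresponding rational function. Such relations multiply: letting `t` run through the
geometric scale `4⁻ⁱ`, `i = O(log n)`, yields `V = r(D) V C' + (rank O(log n))` with a contraction
`C'` and `|r| ≤ 1 / 2` on `[0, 1]`, and `m`-th powers improve this to `|r| ≤ 2⁻ᵐ` at the cost of
rank `O(m log n)`. Since `± Vᵀ W r(D) V ≤ 2⁻ᵐ H` in the Loewner order, the resulting error
`Vᵀ W r(D) V C'` in `H` is at most `2⁻ᵐ ‖H‖_F` in the Frobenius norm.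
-/

open Matrix Finset

section Rank

theorem rank_add_le_rank_add_rank {ι κ K : Type*} [Fintype κ] [Field K] (A B : Matrix ι κ K) :
    (A + B).rank ≤ A.rank + B.rank := by
  have hrange : LinearMap.range (A + B).mulVecLin ≤
      LinearMap.range A.mulVecLin ⊔ LinearMap.range B.mulVecLin := by
    rintro _ ⟨z, rfl⟩
    rw [mulVecLin_add]
    exact Submodule.add_mem_sup ⟨z, rfl⟩ ⟨z, rfl⟩
  exact (Submodule.finrank_mono hrange).trans (Submodule.finrank_add_le_finrank_add_finrank _ _)

end Rank

section Frobenius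

variable {n : ℕ} {A H : Matrix (Fin n) (Fin n) ℝ}

open scoped Matrix.Norms.Frobenius in
theorem froNorm_eq_frobenius_norm (A : Matrix (Fin n) (Fin n) ℝ) : froNorm A = ‖A‖ := by
  simp only [froNorm, frobenius_norm_def, Real.sqrt_eq_rpow, Real.norm_eq_abs, Real.rpow_two,
    sq_abs]

theorem froNorm_nonneg (A : Matrix (Fin n) (Fin n) ℝ) : 0 ≤ froNorm A :=
  Real.sqrt_nonneg _

open scoped Matrix.Norms.Frobenius in
theorem froNorm_add_le (A B : Matrix (Fin n) (Fin n) ℝ) :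
    froNorm (A + B) ≤ froNorm A + froNorm B := by
  simpa only [froNorm_eq_frobenius_norm] using norm_add_le A B

open scoped Matrix.Norms.Frobenius in
theorem froNorm_smul (c : ℝ) (A : Matrix (Fin n) (Fin n) ℝ) :
    froNorm (c • A) = |c| * froNorm A := by
  simpa only [froNorm_eq_frobenius_norm, Real.norm_eq_abs] using norm_smul c A

theorem froNorm_submatrix_equiv (A : Matrix (Fin n) (Fin n) ℝ) (e f : Fin n ≃ Fin n) :
    froNorm (A.submatrix e f) = froNorm A := by
  simp only [froNorm, submatrix_apply]
  rw [e.sum_comp fun i => ∑ j, A i (f j) ^ 2]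
  exact congrArg Real.sqrt (sum_congr rfl fun i _ => f.sum_comp fun j => A i j ^ 2)

theorem froNorm_sq_eq_sum_norm_sq (A : Matrix (Fin n) (Fin n) ℝ) :
    froNorm A ^ 2 = ∑ i, ‖WithLp.toLp 2 (A i)‖ ^ 2 := by
  rw [froNorm, Real.sq_sqrt (by positivity)]
  simp only [EuclideanSpace.norm_sq_eq, Real.norm_eq_abs, sq_abs]

theorem froNorm_sq_eq_trace (A : Matrix (Fin n) (Fin n) ℝ) : froNorm A ^ 2 = (A * Aᵀ).trace := by
  rw [froNorm, Real.sq_sqrt (by positivity)]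
  simp only [trace, diag_apply, mul_apply, transpose_apply, sq]

open scoped Matrix.Norms.L2Operator in
theorem froNorm_mul_le (A B : Matrix (Fin n) (Fin n) ℝ) : froNorm (A * B) ≤ froNorm A * ‖B‖ := by
  have hrow (i : Fin n) : ‖WithLp.toLp 2 ((A * B) i)‖ ≤ ‖B‖ * ‖WithLp.toLp 2 (A i)‖ := by
    have h := l2_opNorm_mulVec Bᴴ (WithLp.toLp 2 (A i))
    rwa [l2_opNorm_conjTranspose, conjTranspose_eq_transpose_of_trivial, mulVec_transpose,
      ← mul_apply_eq_vecMul] at h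
  refine le_of_sq_le_sq ?_ (mul_nonneg (froNorm_nonneg A) (norm_nonneg B))
  rw [mul_pow, mul_comm, froNorm_sq_eq_sum_norm_sq, froNorm_sq_eq_sum_norm_sq, mul_sum]
  exact sum_le_sum fun i _ => by
    simpa only [mul_pow] using pow_le_pow_left₀ (norm_nonneg _) (hrow i) 2

open scoped MatrixOrder in
theorem trace_mul_nonneg_of_posSemidef {κ : Type*} [Fintype κ] {P Q : Matrix κ κ ℝ}
    (hP : P.PosSemidef) (hQ : Q.PosSemidef) : 0 ≤ (P * Q).trace := by
  classical
  obtain ⟨R, rfl⟩ := CStarAlgebra.nonneg_iff_eq_star_mul_self.mp hP.nonneg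
  rw [Matrix.mul_assoc, trace_mul_comm]
  exact (hQ.mul_mul_conjTranspose_same R).trace_nonneg

theorem froNorm_le_froNorm_of_posSemidef (hsub : (H - A).PosSemidef) (hadd : (H + A).PosSemidef) :
    froNorm A ≤ froNorm H := by
  have hsub_symm : Hᵀ - Aᵀ = H - A := hsub.isHermitian
  have hadd_symm : Hᵀ + Aᵀ = H + A := hadd.isHermitian
  have hH : Hᵀ = H := by linear_combination (norm := module) (1 / 2 : ℝ) • (hsub_symm + hadd_symm)
  have hA : Aᵀ = A := by rwa [hH, add_right_inj] at hadd_symm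
  refine le_of_sq_le_sq ?_ (froNorm_nonneg H)
  have htrace := trace_mul_nonneg_of_posSemidef hsub hadd
  rw [sub_mul, mul_add, mul_add, trace_sub, trace_add, trace_add, trace_mul_comm A H] at htrace
  rw [froNorm_sq_eq_trace, froNorm_sq_eq_trace, hH, hA]
  linarith

theorem froNorm_le_froNorm_add_of_posSemidef {P Q : Matrix (Fin n) (Fin n) ℝ} (hP : P.PosSemidef)
    (hQ : Q.PosSemidef) : froNorm P ≤ froNorm (P + Q) := by
  apply froNorm_le_froNorm_of_posSemidef
  · rwa [add_sub_cancel_left]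
  · exact (hP.add hQ).add hP

end Frobenius

section SimultaneousDiagonalization

variable {𝕜 κ : Type*} [RCLike 𝕜] [Fintype κ] [DecidableEq κ] {H K : Matrix κ κ 𝕜}

open scoped MatrixOrder ComplexOrder in
theorem exists_simultaneous_congruence_diagonal (hH : H.PosDef) (hK : K.IsHermitian) :
    ∃ (G : Matrix κ κ 𝕜) (d : κ → ℝ),
      IsUnit G ∧ H = Gᴴ * G ∧ K = Gᴴ * diagonal (RCLike.ofReal ∘ d) * G := by
  obtain ⟨R, hR⟩ := CStarAlgebra.nonneg_iff_eq_star_mul_self.mp hH.posSemidef.nonneg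
  rw [star_eq_conjTranspose] at hR
  have hRR : R⁻¹ * R = 1 := R.nonsing_inv_mul <| (isUnit_iff_isUnit_det R).mp <|
    isUnit_of_mul_isUnit_right (hR ▸ hH.isUnit)
  have hA : (R⁻¹ᴴ * K * R⁻¹).IsHermitian := isHermitian_conjTranspose_mul_mul R⁻¹ hK
  set U := (hA.eigenvectorUnitary : Matrix κ κ 𝕜)
  have hspectral : R⁻¹ᴴ * K * R⁻¹ = U * diagonal (RCLike.ofReal ∘ hA.eigenvalues) * Uᴴ :=
    hA.spectral_theorem
  have hU : U * Uᴴ = 1 := Unitary.coe_mul_star_self hA.eigenvectorUnitary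
  have hH' : H = (Uᴴ * R)ᴴ * (Uᴴ * R) := by
    calc H = Rᴴ * (U * Uᴴ) * R := by rw [hU, Matrix.mul_one, hR]
      _ = (Uᴴ * R)ᴴ * (Uᴴ * R) := by
        simp only [conjTranspose_mul, conjTranspose_conjTranspose, Matrix.mul_assoc]
  refine ⟨Uᴴ * R, hA.eigenvalues, isUnit_of_mul_isUnit_right (hH' ▸ hH.isUnit), hH', ?_⟩
  calc K = (R⁻¹ * R)ᴴ * K * (R⁻¹ * R) := by
        rw [hRR, conjTranspose_one, Matrix.one_mul, Matrix.mul_one]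
    _ = Rᴴ * (R⁻¹ᴴ * K * R⁻¹) * R := by simp only [conjTranspose_mul, Matrix.mul_assoc]
    _ = Rᴴ * (U * diagonal (RCLike.ofReal ∘ hA.eigenvalues) * Uᴴ) * R :=
        congrArg (Rᴴ * · * R) hspectral
    _ = (Uᴴ * R)ᴴ * diagonal (RCLike.ofReal ∘ hA.eigenvalues) * (Uᴴ * R) := by
        simp only [conjTranspose_mul, conjTranspose_conjTranspose, Matrix.mul_assoc]

end SimultaneousDiagonalization

section Moment

variable {ι : Type*} [Fintype ι] [DecidableEq ι] {n : ℕ}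

/-- The moment matrix `∑ l, w l * x l ^ (i + j)` of the discrete measure with mass `w l` at the
node `x l`, written as `Vᵀ diag(w) V` with `V` the rectangular Vandermonde matrix of the nodes. -/
def momentMatrix (n : ℕ) (w x : ι → ℝ) : Matrix (Fin n) (Fin n) ℝ :=
  (rectVandermonde x 1 n)ᵀ * diagonal w * rectVandermonde x 1 n

theorem momentMatrix_apply (w x : ι → ℝ) (i j : Fin n) :
    momentMatrix n w x i j = ∑ l, w l * x l ^ ((i : ℕ) + j) := by
  rw [momentMatrix, mul_apply]
  refine sum_congr rfl fun l _ => ?_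
  simp only [mul_diagonal, transpose_apply, rectVandermonde_apply, Pi.one_apply, one_pow, mul_one]
  ring

theorem posSemidef_transpose_mul_diagonal_mul {κ : Type*} [Finite κ] (V : Matrix ι κ ℝ)
    {w : ι → ℝ} (hw : 0 ≤ w) : (Vᵀ * diagonal w * V).PosSemidef := by
  simpa only [conjTranspose_eq_transpose_of_trivial] using
    (PosSemidef.diagonal hw).conjTranspose_mul_mul_same V

theorem froNorm_transpose_mul_diagonal_mul_le (V : Matrix ι (Fin n) ℝ) {u w : ι → ℝ}
    (huw : ∀ l, |u l| ≤ w l) : froNorm (Vᵀ * diagonal u * V) ≤ froNorm (Vᵀ * diagonal w * V) := by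
  apply froNorm_le_froNorm_of_posSemidef
  · rw [← Matrix.sub_mul, ← Matrix.mul_sub, diagonal_sub]
    exact posSemidef_transpose_mul_diagonal_mul V fun l => sub_nonneg.mpr (le_of_abs_le (huw l))
  · rw [← Matrix.add_mul, ← Matrix.mul_add, diagonal_add]
    exact posSemidef_transpose_mul_diagonal_mul V fun l =>
      neg_le_iff_add_nonneg'.mp (neg_le_of_abs_le (huw l))

theorem IsHankel.exists_seq {H : Matrix (Fin n) (Fin n) ℝ} (hH : IsHankel H) :
    ∃ h : ℕ → ℝ, ∀ i j : Fin n, H i j = h (i + j) := by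
  let indexSum : Fin n × Fin n → ℕ := fun p => p.1 + p.2
  have hfactors : Function.FactorsThrough (fun p : Fin n × Fin n => H p.1 p.2) indexSum :=
    fun p q hpq => hH _ _ _ _ hpq
  exact ⟨Function.extend indexSum (fun p => H p.1 p.2) 0,
    fun i j => (hfactors.extend_apply 0 (i, j)).symm⟩

theorem eq_diagonal_mul_rectVandermonde [NeZero n] {G : Matrix ι (Fin n) ℝ} {x : ι → ℝ}
    (hG : ∀ l (i : ℕ) (hi : i + 1 < n), G l ⟨i + 1, hi⟩ = x l * G l ⟨i, by lia⟩) :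
    G = diagonal (fun l => G l 0) * rectVandermonde x 1 n := by
  ext l ⟨i, hi⟩
  rw [diagonal_mul, rectVandermonde_apply, Pi.one_apply, one_pow, mul_one]
  induction i with
  | zero => simp
  | succ i ih => rw [hG, ih, pow_succ]; ring

theorem IsHankel.exists_eq_momentMatrix [NeZero n] {H : Matrix (Fin n) (Fin n) ℝ}
    (hH : IsHankel H) (hpos : H.PosDef) :
    ∃ w x : Fin n → ℝ, 0 ≤ w ∧ H = momentMatrix n w x := by
  obtain ⟨h, hh⟩ := hH.exists_seq
  let K : Matrix (Fin n) (Fin n) ℝ := of fun i j => h (i + j + 1)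
  have hK : K.IsHermitian := by
    ext i j
    simp [K, add_comm (i : ℕ)]
  obtain ⟨G, x, hunit, rfl, hKG⟩ := exists_simultaneous_congruence_diagonal hpos hK
  have hshift (l : Fin n) (i : ℕ) (hi : i + 1 < n) :
      G l ⟨i + 1, hi⟩ = x l * G l ⟨i, by lia⟩ := by
    have hcol : Gᴴ *ᵥ G.col ⟨i + 1, hi⟩ = Gᴴ *ᵥ (diagonal x * G).col ⟨i, by lia⟩ := by
      ext r
      calc (Gᴴ * G) r ⟨i + 1, hi⟩ = K r ⟨i, by lia⟩ := hh _ _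
        _ = (Gᴴ * (diagonal x * G)) r ⟨i, by lia⟩ := by rw [hKG, Matrix.mul_assoc]; rfl
    simpa only [col_apply, diagonal_mul] using
      congrFun (mulVec_injective_of_isUnit hunit.star hcol) l
  have hGV := eq_diagonal_mul_rectVandermonde hshift
  refine ⟨fun l => G l 0 * G l 0, x, fun l => mul_self_nonneg _, ?_⟩
  conv_lhs => rw [hGV]
  rw [momentMatrix, ← diagonal_mul_diagonal]
  simp only [conjTranspose_eq_transpose_of_trivial, transpose_mul, diagonal_transpose,
    Matrix.mul_assoc]

end Moment

section Accretive

open scoped RealInnerProductSpace Matrix.Norms.L2Operator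

theorem norm_sub_le_norm_add_of_inner_nonneg {E : Type*} [NormedAddCommGroup E]
    [InnerProductSpace ℝ E] {u v : E} (huv : 0 ≤ ⟪u, v⟫) : ‖u - v‖ ≤ ‖u + v‖ := by
  refine le_of_sq_le_sq ?_ (norm_nonneg _)
  rw [norm_sub_sq_real, norm_add_sq_real]
  linarith

theorem norm_le_mul_norm_sub_of_pow_eq_zero {E : Type*} [NormedAddCommGroup E] [NormedSpace ℝ E]
    {T : E →L[ℝ] E} (hT : ‖T‖ ≤ 1) {n : ℕ} (hTn : T ^ n = 0) (g : E) :
    ‖g‖ ≤ n * ‖g - T g‖ := by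
  have hgeom : (∑ i ∈ range n, T ^ i) (g - T g) = g := by
    simpa [hTn] using DFunLike.congr_fun (geom_sum_mul_neg T n) g
  have hcontr (i : ℕ) (v : E) : ‖(T ^ i) v‖ ≤ ‖v‖ := by
    induction i with
    | zero => simp
    | succ i ih => simpa [pow_succ'] using T.le_of_opNorm_le_of_le hT ih
  calc ‖g‖ = ‖∑ i ∈ range n, (T ^ i) (g - T g)‖ := by rw [← _root_.sum_apply, hgeom]
    _ ≤ ∑ _i ∈ range n, ‖g - T g‖ := norm_sum_le_of_le _ fun i _ => hcontr i _
    _ = n * ‖g - T g‖ := by rw [sum_const, card_range, nsmul_eq_mul]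

theorem norm_sq_le_inner_sub_of_pow_eq_zero {E : Type*} [NormedAddCommGroup E]
    [InnerProductSpace ℝ E] {T : E →L[ℝ] E} (hT : ‖T‖ ≤ 1) {n : ℕ} (hTn : T ^ n = 0) (g : E) :
    ‖g‖ ^ 2 ≤ 2 * n ^ 2 * ⟪g - T g, g⟫ := by
  have hcontr : ‖T g‖ ^ 2 ≤ ‖g‖ ^ 2 :=
    pow_le_pow_left₀ (norm_nonneg _) (T.le_of_opNorm_le_of_le hT le_rfl |>.trans_eq (one_mul _)) 2
  have hinner : ‖g - T g‖ ^ 2 ≤ 2 * ⟪g - T g, g⟫ := by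
    rw [norm_sub_sq_real, inner_sub_left, real_inner_self_eq_norm_sq, real_inner_comm]
    linarith
  calc ‖g‖ ^ 2 ≤ (n * ‖g - T g‖) ^ 2 :=
        pow_le_pow_left₀ (norm_nonneg g) (norm_le_mul_norm_sub_of_pow_eq_zero hT hTn g) 2
    _ = n ^ 2 * ‖g - T g‖ ^ 2 := mul_pow _ _ 2
    _ ≤ n ^ 2 * (2 * ⟪g - T g, g⟫) := by gcongr
    _ = 2 * n ^ 2 * ⟪g - T g, g⟫ := by ring

variable {κ : Type*} [Fintype κ] [DecidableEq κ] {X N : Matrix κ κ ℝ} {t : ℝ}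

/-- A real matrix, not necessarily symmetric, is accretive if its quadratic form is nonnegative.
This is the condition under which its Cayley transform is a contraction. -/
def IsAccretive (X : Matrix κ κ ℝ) : Prop :=
  ∀ g : EuclideanSpace ℝ κ, 0 ≤ ⟪toEuclideanCLM (𝕜 := ℝ) X g, g⟫

theorem isAccretive_smul_one_sub_of_pow_eq_zero {n : ℕ} (hn : n ≠ 0) (hN : ‖N‖ ≤ 1)
    (hNn : N ^ n = 0) : IsAccretive ((1 - 1 / (2 * n ^ 2) : ℝ) • 1 - N) := by
  intro g
  have hgap := norm_sq_le_inner_sub_of_pow_eq_zero (T := toEuclideanCLM (𝕜 := ℝ) N) hN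
    (by rw [← map_pow, hNn, map_zero]) g
  have hsplit : ⟪toEuclideanCLM (𝕜 := ℝ) ((1 - 1 / (2 * n ^ 2) : ℝ) • 1 - N) g, g⟫ =
      ⟪g - toEuclideanCLM (𝕜 := ℝ) N g, g⟫ - ‖g‖ ^ 2 / (2 * n ^ 2) := by
    rw [map_sub, map_smul, map_one, _root_.sub_apply, _root_.smul_apply, one_apply_eq_self,
      inner_sub_left, inner_sub_left, real_inner_smul_left, real_inner_self_eq_norm_sq]
    ring
  rw [hsplit, sub_nonneg, div_le_iff₀' (by positivity)]
  exact hgap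

namespace IsAccretive

theorem isUnit_add_smul_one (hX : IsAccretive X) (ht : 0 < t) : IsUnit (X + t • 1) := by
  rw [← mulVec_injective_iff_isUnit]
  refine (injective_iff_map_eq_zero (X + t • 1).mulVecLin).mpr fun z hz => ?_
  have hXz : X *ᵥ z = -(t • z) := by
    rwa [mulVecLin_apply, add_mulVec, smul_mulVec, one_mulVec, add_eq_zero_iff_eq_neg] at hz
  have hinner := hX (WithLp.toLp 2 z)
  rw [toEuclideanCLM_toLp, hXz, WithLp.toLp_neg, WithLp.toLp_smul, inner_neg_left,
    real_inner_smul_left, real_inner_self_eq_norm_sq] at hinner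
  have hnorm : ‖WithLp.toLp 2 z‖ ^ 2 = 0 := by nlinarith [sq_nonneg ‖WithLp.toLp 2 z‖]
  simpa using hnorm

theorem norm_cayley_le_one (hX : IsAccretive X) (ht : 0 < t) :
    ‖(X - t • 1) * (X + t • 1)⁻¹‖ ≤ 1 := by
  have hinv : (X + t • 1) * (X + t • 1)⁻¹ = 1 :=
    mul_nonsing_inv _ ((isUnit_iff_isUnit_det _).mp (hX.isUnit_add_smul_one ht))
  rw [← l2_opNorm_toEuclideanCLM]
  refine ContinuousLinearMap.opNorm_le_bound _ zero_le_one fun z => ?_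
  set φ := toEuclideanCLM (n := κ) (𝕜 := ℝ)
  set g := φ (X + t • 1)⁻¹ z
  have hz : φ X g + t • g = z := by
    simpa using DFunLike.congr_fun (congrArg φ hinv) z
  have hcayley : φ ((X - t • 1) * (X + t • 1)⁻¹) z = φ X g - t • g := by
    simp [g]
  have hinner : 0 ≤ ⟪φ X g, t • g⟫ := by
    rw [real_inner_smul_right]
    exact mul_nonneg ht.le (hX g)
  rw [one_mul, hcayley, ← hz]
  exact norm_sub_le_norm_add_of_inner_nonneg hinner

end IsAccretive

end Accretive

section Displacement

open scoped Matrix.Norms.L2Operator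

variable {ι κ : Type*} [Fintype ι] [DecidableEq ι] [Fintype κ] [DecidableEq κ]
  {V : Matrix ι κ ℝ} {N : Matrix κ κ ℝ} {f g : ι → ℝ} {K L : ℕ}

/-- `HasDisplacement V f K` says that `V` agrees with `diag(f) V N` up to rank `K` for some
contraction `N`. If moreover `f` is small, then `V` is close to a matrix of rank `K`. -/
def HasDisplacement (V : Matrix ι κ ℝ) (f : ι → ℝ) (K : ℕ) : Prop :=
  ∃ N : Matrix κ κ ℝ, ‖N‖ ≤ 1 ∧ (V - diagonal f * V * N).rank ≤ K

namespace HasDisplacement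

theorem one (V : Matrix ι κ ℝ) : HasDisplacement V 1 0 :=
  ⟨1, by rw [← l2_opNorm_toEuclideanCLM, map_one]; exact ContinuousLinearMap.norm_id_le,
    by simp [Pi.one_def]⟩

theorem mul (hf : HasDisplacement V f K) (hg : HasDisplacement V g L) :
    HasDisplacement V (f * g) (K + L) := by
  obtain ⟨N, hN, hfK⟩ := hf
  obtain ⟨M, hM, hgL⟩ := hg
  refine ⟨N * M, (l2_opNorm_mul N M).trans (mul_le_one₀ hN (norm_nonneg M) hM), ?_⟩
  have hsplit : V - diagonal (f * g) * V * (N * M) =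
      diagonal g * (V - diagonal f * V * N) * M + (V - diagonal g * V * M) := by
    rw [mul_comm f g, show diagonal (g * f) = diagonal g * diagonal f from
      (diagonal_mul_diagonal g f).symm]
    simp only [Matrix.mul_sub, Matrix.sub_mul, Matrix.mul_assoc]
    abel
  have hrank := (rank_mul_le_left (diagonal g * (V - diagonal f * V * N)) M).trans
    (rank_mul_le_right _ _)
  calc (V - diagonal (f * g) * V * (N * M)).rank ≤ _ := hsplit ▸ rank_add_le_rank_add_rank _ _
    _ ≤ K + L := add_le_add (hrank.trans hfK) hgL

theorem prod {α : Type*} {s : Finset α} {f : α → ι → ℝ} (hf : ∀ a ∈ s, HasDisplacement V (f a) K) :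
    HasDisplacement V (∏ a ∈ s, f a) (#s * K) := by
  classical
  induction s using Finset.induction_on with
  | empty => simpa using one V
  | insert a s ha ih =>
    rw [prod_insert ha, card_insert_of_notMem ha, add_one_mul, add_comm]
    exact (hf a (mem_insert_self a s)).mul (ih fun b hb => hf b (mem_insert_of_mem hb))

theorem pow (hf : HasDisplacement V f K) (m : ℕ) : HasDisplacement V (f ^ m) (m * K) := by
  simpa using prod (s := range m) fun _ _ => hf

end HasDisplacement

/-- The scalar Cayley transform `(b - t) / (b + t)` at `b = (1 - (1 - μ) x) / x`, with denominators
cleared so that `x = 0` is allowed. -/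
noncomputable def cayleyFactor (μ t x : ℝ) : ℝ :=
  (1 - (1 - μ) * x - t * x) / (1 - (1 - μ) * x + t * x)

theorem hasDisplacement_cayleyFactor {μ t : ℝ} {x : ι → ℝ} (ht : 0 < t)
    (hden : ∀ l, 1 - (1 - μ) * x l + t * x l ≠ 0) (hN : IsAccretive ((1 - μ) • 1 - N))
    (hrank : (V - diagonal x * V * N).rank ≤ K) :
    HasDisplacement V (fun l => cayleyFactor μ t (x l)) K := by
  set P := (1 - μ) • 1 - N + t • 1 with hP
  set Q := (1 - μ) • 1 - N - t • 1 with hQ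
  have hPP : P * P⁻¹ = 1 :=
    mul_nonsing_inv _ ((isUnit_iff_isUnit_det _).mp (hN.isUnit_add_smul_one ht))
  refine ⟨Q * P⁻¹, hN.norm_cayley_le_one ht, ?_⟩
  set c : ι → ℝ := fun l => 2 * t / (1 - (1 - μ) * x l + t * x l)
  have hcayley : V * P - diagonal (fun l => cayleyFactor μ t (x l)) * V * Q =
      diagonal c * (V - diagonal x * V * N) := by
    ext l j
    simp only [hP, hQ, Matrix.mul_add, Matrix.mul_sub, Matrix.mul_smul, Matrix.mul_one,
      Matrix.sub_apply, Matrix.add_apply, Matrix.smul_apply, Matrix.mul_assoc, diagonal_mul,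
      smul_eq_mul, c, cayleyFactor]
    field_simp [hden l]
    ring
  have hfactor : V - diagonal (fun l => cayleyFactor μ t (x l)) * V * (Q * P⁻¹) =
      diagonal c * (V - diagonal x * V * N) * P⁻¹ := by
    rw [← hcayley, Matrix.sub_mul (V * P), Matrix.mul_assoc V, hPP, Matrix.mul_one,
      Matrix.mul_assoc _ Q]
  rw [hfactor]
  exact ((rank_mul_le_left _ _).trans (rank_mul_le_right _ _)).trans hrank

theorem abs_cayleyFactor_le_one {μ t x : ℝ} (hμ : 0 ≤ μ) (ht : 0 ≤ t) (hx : x ∈ Set.Icc 0 1) :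
    |cayleyFactor μ t x| ≤ 1 := by
  obtain ⟨hx0, hx1⟩ := hx
  have hnum : 0 ≤ 1 - (1 - μ) * x := by nlinarith
  have htx : 0 ≤ t * x := mul_nonneg ht hx0
  rw [cayleyFactor, abs_div, abs_of_nonneg (add_nonneg hnum htx)]
  exact div_le_one_of_le₀ (abs_le.mpr ⟨by linarith, by linarith⟩) (add_nonneg hnum htx)

theorem abs_cayleyFactor_le_half {μ t x : ℝ} (hlower : t * x / 2 ≤ 1 - (1 - μ) * x)
    (hupper : 1 - (1 - μ) * x ≤ 2 * (t * x)) : |cayleyFactor μ t x| ≤ 1 / 2 := by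
  have hden : 0 ≤ 1 - (1 - μ) * x + t * x := by linarith
  rw [cayleyFactor, abs_div, abs_of_nonneg hden]
  refine div_le_of_le_mul₀ hden (by norm_num) (abs_le.mpr ⟨by linarith, by linarith⟩)

/-- A rational function that is at most `1 / 2` in absolute value on `[0, 1]`: the factor `x` takes
care of `x ≤ 1 / 2`, and one of the Cayley factors with `t = 1, 1/4, 1/16, …` of every other `x`. -/
noncomputable def contractionFactor (n : ℕ) (x : ℝ) : ℝ :=
  x * ∏ i ∈ range (Nat.log 2 n + 2), cayleyFactor (1 / (2 * n ^ 2)) ((1 / 4) ^ i) x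

theorem lt_log_add_two_of_le_inv_pow {n i : ℕ} (hn : n ≠ 0)
    (h : (1 / (4 * n ^ 2) : ℝ) ≤ (1 / 4) ^ i) : i < Nat.log 2 n + 2 := by
  have hn_lt : (n : ℝ) < 2 ^ (Nat.log 2 n + 1) := by
    exact_mod_cast Nat.lt_pow_succ_log_self one_lt_two n
  rw [_root_.one_div_pow, one_div_le_one_div (by positivity) (by positivity)] at h
  refine (pow_lt_pow_iff_right₀ (by norm_num : (1 : ℝ) < 4)).mp ?_
  calc (4 : ℝ) ^ i ≤ 4 * n ^ 2 := h
    _ < 4 * (2 ^ (Nat.log 2 n + 1)) ^ 2 := by gcongr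
    _ = 4 ^ (Nat.log 2 n + 2) := by rw [pow_right_comm]; norm_num [pow_succ']

theorem exists_abs_cayleyFactor_le_half {n : ℕ} (hn : n ≠ 0) {x : ℝ} (hx : x ∈ Set.Ioc (1 / 2) 1) :
    ∃ i < Nat.log 2 n + 2, |cayleyFactor (1 / (2 * n ^ 2)) ((1 / 4) ^ i) x| ≤ 1 / 2 := by
  obtain ⟨hx0, hx1⟩ := hx
  have hxpos : 0 < x := by linarith
  set μ : ℝ := 1 / (2 * n ^ 2) with hμ
  have hμ0 : 0 < μ := by positivity
  have hn1 : (1 : ℝ) ≤ n := by exact_mod_cast Nat.one_le_iff_ne_zero.mpr hn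
  have hμ1 : μ ≤ 1 := by
    rw [hμ, div_le_one (by positivity)]
    nlinarith
  set y := (1 - (1 - μ) * x) / (2 * x) with hy
  have hyx : 1 - (1 - μ) * x = 2 * (y * x) := by rw [hy]; field_simp
  have hy0 : μ / 2 ≤ y := by rw [hy, le_div_iff₀ (mul_pos two_pos hxpos)]; linarith
  have hy1 : y ≤ 1 := by rw [hy, div_le_one (mul_pos two_pos hxpos)]; nlinarith
  obtain ⟨i, hlower, hupper⟩ := exists_nat_pow_near_of_lt_one (y := (1 / 4 : ℝ))
    ((half_pos hμ0).trans_le hy0) hy1 (by norm_num) (by norm_num)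
  refine ⟨i, ?_, abs_cayleyFactor_le_half ?_ ?_⟩
  · refine lt_log_add_two_of_le_inv_pow hn (le_trans (le_of_eq ?_) (hy0.trans hupper))
    rw [hμ]
    ring
  · rw [hyx]; rw [pow_succ] at hlower; nlinarith
  · rw [hyx]; gcongr

theorem abs_contractionFactor_le_half {n : ℕ} (hn : n ≠ 0) {x : ℝ} (hx : x ∈ Set.Icc 0 1) :
    |contractionFactor n x| ≤ 1 / 2 := by
  have hle (i : ℕ) : |cayleyFactor (1 / (2 * n ^ 2)) ((1 / 4) ^ i) x| ≤ 1 :=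
    abs_cayleyFactor_le_one (by positivity) (by positivity) hx
  rw [contractionFactor, abs_mul, abs_of_nonneg hx.1, abs_prod]
  rcases le_or_gt x (1 / 2) with hx2 | hx2
  · exact (mul_le_of_le_one_right hx.1
      (prod_le_one (fun _ _ => abs_nonneg _) fun i _ => hle i)).trans hx2
  · obtain ⟨i, hi, hfactor⟩ := exists_abs_cayleyFactor_le_half hn ⟨hx2, hx.2⟩
    refine (mul_le_of_le_one_left (prod_nonneg fun _ _ => abs_nonneg _) hx.2).trans ?_
    rw [← mul_prod_erase _ _ (mem_range.mpr hi)]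
    exact (mul_le_of_le_one_right (abs_nonneg _)
      (prod_le_one (fun _ _ => abs_nonneg _) fun i _ => hle i)).trans hfactor

theorem hasDisplacement_contractionFactor {n : ℕ} (hn : n ≠ 0) (hN : ‖N‖ ≤ 1) (hNn : N ^ n = 0)
    {x : ι → ℝ} (hx : ∀ l, x l ∈ Set.Icc 0 1) (hrank : (V - diagonal x * V * N).rank ≤ K) :
    HasDisplacement V (fun l => contractionFactor n (x l)) ((Nat.log 2 n + 3) * K) := by
  have hden (i : ℕ) (l : ι) : 1 - (1 - 1 / (2 * n ^ 2) : ℝ) * x l + (1 / 4) ^ i * x l ≠ 0 := by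
    obtain ⟨hx0, hx1⟩ := hx l
    have hμ : 0 ≤ 1 / (2 * n ^ 2 : ℝ) * x l := by positivity
    have ht : 0 < (1 / 4 : ℝ) ^ i := by positivity
    rcases hx0.eq_or_lt with hx0 | hx0
    · simp [← hx0]
    · nlinarith [mul_pos ht hx0]
  have hcayley (i : ℕ) : HasDisplacement V
      (fun l => cayleyFactor (1 / (2 * n ^ 2)) ((1 / 4) ^ i) (x l)) K :=
    hasDisplacement_cayleyFactor (by positivity) (hden i)
      (isAccretive_smul_one_sub_of_pow_eq_zero hn hN hNn) hrank
  convert HasDisplacement.mul ⟨N, hN, hrank⟩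
    (HasDisplacement.prod (s := range (Nat.log 2 n + 2)) fun i _ => hcayley i) using 1
  · ext l
    simp [contractionFactor]
  · rw [card_range]
    ring

theorem HasDisplacement.exists_rank_le_froNorm_sub_le {n : ℕ} {V : Matrix ι (Fin n) ℝ} {w : ι → ℝ}
    {δ : ℝ} (hV : HasDisplacement V f K) (hw : 0 ≤ w) (hδ : 0 ≤ δ) (hf : ∀ l, |f l| ≤ δ) :
    ∃ B : Matrix (Fin n) (Fin n) ℝ, B.rank ≤ K ∧
      froNorm (Vᵀ * diagonal w * V - B) ≤ δ * froNorm (Vᵀ * diagonal w * V) := by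
  obtain ⟨N, hN, hrank⟩ := hV
  have herror : Vᵀ * diagonal w * V - Vᵀ * diagonal w * (V - diagonal f * V * N) =
      Vᵀ * diagonal (fun l => w l * f l) * V * N := by
    simp only [← diagonal_mul_diagonal, Matrix.mul_sub, Matrix.mul_assoc, sub_sub_cancel]
  have hweight (l : ι) : |w l * f l| ≤ (δ • w) l := by
    rw [abs_mul, abs_of_nonneg (hw l), Pi.smul_apply, smul_eq_mul, mul_comm δ]
    exact mul_le_mul_of_nonneg_left (hf l) (hw l)
  refine ⟨Vᵀ * diagonal w * (V - diagonal f * V * N), (rank_mul_le_right _ _).trans hrank, ?_⟩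
  rw [herror]
  calc froNorm (Vᵀ * diagonal (fun l => w l * f l) * V * N)
      ≤ froNorm (Vᵀ * diagonal (fun l => w l * f l) * V) * ‖N‖ := froNorm_mul_le _ N
    _ ≤ froNorm (Vᵀ * diagonal (fun l => w l * f l) * V) :=
        mul_le_of_le_one_right (froNorm_nonneg _) hN
    _ ≤ froNorm (Vᵀ * diagonal (δ • w) * V) := froNorm_transpose_mul_diagonal_mul_le V hweight
    _ = δ * froNorm (Vᵀ * diagonal w * V) := by
        rw [diagonal_smul, Matrix.mul_smul, Matrix.smul_mul, froNorm_smul, abs_of_nonneg hδ]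

end Displacement

section Shift

open scoped Matrix.Norms.L2Operator

variable {n : ℕ}

/-- The nilpotent shift with ones on the superdiagonal, so that multiplying `V` by it on
the right moves the columns of `V` one step to the right. -/
def shiftMatrix (n : ℕ) : Matrix (Fin n) (Fin n) ℝ :=
  of fun i j => if (i : ℕ) + 1 = j then 1 else 0

theorem shiftMatrix_apply (i j : Fin n) :
    shiftMatrix n i j = if (i : ℕ) + 1 = j then 1 else 0 := rfl

theorem mul_shiftMatrix_apply {ι : Type*} (V : Matrix ι (Fin n) ℝ) (l : ι) (j : Fin n) :
    (V * shiftMatrix n) l j = if h : (j : ℕ) = 0 then 0 else V l ⟨j - 1, by lia⟩ := by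
  rw [mul_apply]
  split_ifs with h
  · exact sum_eq_zero fun i _ => by simp [shiftMatrix_apply, h]
  · rw [sum_eq_single_of_mem (⟨j - 1, by lia⟩ : Fin n) (mem_univ _)]
    · simp [shiftMatrix_apply, show (j : ℕ) - 1 + 1 = j by lia]
    · intro i _ hi
      rw [shiftMatrix_apply, if_neg (fun h => hi (Fin.ext (by simp [← h]))), mul_zero]

theorem shiftMatrix_pow_apply (k : ℕ) (i j : Fin n) :
    (shiftMatrix n ^ k) i j = if (i : ℕ) + k = j then 1 else 0 := by
  induction k generalizing j with
  | zero => simp [one_apply, Fin.ext_iff]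
  | succ k ih =>
    rw [pow_succ, mul_shiftMatrix_apply]
    simp only [ih]
    split_ifs <;> lia

theorem shiftMatrix_pow_self (n : ℕ) : shiftMatrix n ^ n = 0 := by
  ext i j
  rw [shiftMatrix_pow_apply, if_neg (by lia), Matrix.zero_apply]

theorem norm_shiftMatrix_le_one (n : ℕ) : ‖shiftMatrix n‖ ≤ 1 := by
  have hdiag : (shiftMatrix n)ᴴ * shiftMatrix n =
      diagonal fun j : Fin n => if (j : ℕ) = 0 then 0 else 1 := by
    ext i j
    rw [mul_shiftMatrix_apply, diagonal_apply]
    simp only [conjTranspose_apply, shiftMatrix_apply, Fin.ext_iff]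
    split_ifs <;> first | lia | simp
  refine le_of_sq_le_sq ?_ zero_le_one
  rw [sq, ← l2_opNorm_conjTranspose_mul_self, hdiag, l2_opNorm_diagonal, one_pow,
    pi_norm_le_iff_of_nonneg zero_le_one]
  intro j
  split_ifs <;> simp

theorem rank_rectVandermonde_sub_mul_shiftMatrix_le_one {ι : Type*} [Fintype ι] [DecidableEq ι]
    [NeZero n] (x : ι → ℝ) :
    (rectVandermonde x 1 n - diagonal x * rectVandermonde x 1 n * shiftMatrix n).rank ≤ 1 := by
  have hfirst : rectVandermonde x 1 n - diagonal x * rectVandermonde x 1 n * shiftMatrix n =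
      vecMulVec 1 (Pi.single 0 1) := by
    ext l j
    rw [Matrix.sub_apply, mul_shiftMatrix_apply, vecMulVec_apply, Pi.single_apply]
    simp only [diagonal_mul, rectVandermonde_apply, Fin.ext_iff, Fin.val_zero]
    split_ifs with h
    · simp [h]
    · simp [← pow_succ', show (j : ℕ) - 1 + 1 = j by lia]
  exact hfirst ▸ rank_vecMulVec_le _ _

end Shift

section MomentApprox

open scoped Pointwise

variable {n K L : ℕ} {S T : Set ℝ} {δ η : ℝ}

/-- Every moment matrix of size `n` with nonnegative weights and nodes in `S` is approximated by a
matrix of rank at most `K` up to the relative error `δ` in the Frobenius norm. -/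
def MomentApprox (n : ℕ) (S : Set ℝ) (K : ℕ) (δ : ℝ) : Prop :=
  ∀ (ι : Type) [Fintype ι] [DecidableEq ι] (w x : ι → ℝ), 0 ≤ w → (∀ l, x l ∈ S) →
    ∃ B : Matrix (Fin n) (Fin n) ℝ, B.rank ≤ K ∧
      froNorm (momentMatrix n w x - B) ≤ δ * froNorm (momentMatrix n w x)

theorem momentApprox_Icc_zero_one (n : ℕ) [NeZero n] (m : ℕ) :
    MomentApprox n (Set.Icc 0 1) (m * (Nat.log 2 n + 3)) ((1 / 2) ^ m) := by
  intro ι _ _ w x hw hx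
  have hdisp := (hasDisplacement_contractionFactor (NeZero.ne n) (norm_shiftMatrix_le_one n)
    (shiftMatrix_pow_self n) hx (rank_rectVandermonde_sub_mul_shiftMatrix_le_one x)).pow m
  rw [mul_one] at hdisp
  refine hdisp.exists_rank_le_froNorm_sub_le hw (by positivity) fun l => ?_
  rw [Pi.pow_apply, abs_pow]
  exact pow_le_pow_left₀ (abs_nonneg _) (abs_contractionFactor_le_half (NeZero.ne n) (hx l)) m

namespace MomentApprox

theorem neg (hS : MomentApprox n S K δ) : MomentApprox n (-S) K δ := by
  intro ι _ _ w x hw hx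
  obtain ⟨B, hrank, hB⟩ := hS ι w (-x) hw hx
  set E : Matrix (Fin n) (Fin n) ℝ := diagonal fun i => (-1) ^ (i : ℕ)
  have hfro (A : Matrix (Fin n) (Fin n) ℝ) : froNorm (E * A * E) = froNorm A := by
    simp [froNorm, E, mul_pow, ← pow_mul, mul_comm _ 2]
  have hmoment : momentMatrix n w x = E * momentMatrix n w (-x) * E := by
    ext i j
    rw [mul_diagonal, diagonal_mul, momentMatrix_apply, momentMatrix_apply, mul_sum, sum_mul]
    refine sum_congr rfl fun l _ => ?_
    rw [← neg_neg (x l), neg_pow, pow_add (-1 : ℝ), Pi.neg_apply]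
    ring
  refine ⟨E * B * E, ((rank_mul_le_left _ _).trans (rank_mul_le_right _ _)).trans hrank, ?_⟩
  rwa [hmoment, ← Matrix.sub_mul, ← Matrix.mul_sub, hfro, hfro]

theorem inv (hS : MomentApprox n S K δ) : MomentApprox n (S⁻¹ \ {0}) K δ := by
  intro ι _ _ w x hw hx
  set w' : ι → ℝ := fun l => w l * x l ^ (2 * (n - 1))
  have hw' : 0 ≤ w' := fun l => mul_nonneg (hw l) ((even_two_mul _).pow_nonneg _)
  obtain ⟨B, hrank, hB⟩ := hS ι w' x⁻¹ hw' fun l => (hx l).1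
  have hmoment : momentMatrix n w x =
      (momentMatrix n w' x⁻¹).submatrix Fin.revPerm Fin.revPerm := by
    ext i j
    rw [submatrix_apply, momentMatrix_apply, momentMatrix_apply]
    refine sum_congr rfl fun l _ => ?_
    have hx0 : x l ≠ 0 := (hx l).2
    rw [Pi.inv_apply, inv_pow, eq_mul_inv_iff_mul_eq₀ (pow_ne_zero _ hx0), mul_assoc, ← pow_add]
    simp only [Fin.revPerm_apply, Fin.val_rev, w']
    congr 2
    lia
  refine ⟨B.submatrix Fin.revPerm Fin.revPerm, (rank_submatrix B _ _).trans_le hrank, ?_⟩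
  rw [hmoment, froNorm_submatrix_equiv]
  exact (froNorm_submatrix_equiv (momentMatrix n w' x⁻¹ - B) _ _).trans_le hB

theorem union (hS : MomentApprox n S K δ) (hT : MomentApprox n T L η) (hδ : 0 ≤ δ) (hη : 0 ≤ η) :
    MomentApprox n (S ∪ T) (K + L) (δ + η) := by
  classical
  intro ι _ _ w x hw hx
  set M := momentMatrix n w x
  set P := momentMatrix n (fun l : {l // x l ∈ S} => w l) fun l => x l
  set Q := momentMatrix n (fun l : {l // x l ∉ S} => w l) fun l => x l
  have hM : M = P + Q := by
    ext i j
    simp only [M, P, Q, Matrix.add_apply, momentMatrix_apply]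
    exact (Fintype.sum_subtype_add_sum_subtype (fun l => x l ∈ S) _).symm
  have hP : P.PosSemidef := posSemidef_transpose_mul_diagonal_mul _ fun l => hw l
  have hQ : Q.PosSemidef := posSemidef_transpose_mul_diagonal_mul _ fun l => hw l
  obtain ⟨B, hB, hPB⟩ := hS {l // x l ∈ S} _ _ (fun l => hw l) fun l => l.2
  obtain ⟨C, hC, hQC⟩ := hT {l // x l ∉ S} _ _ (fun l => hw l) fun l => (hx l).resolve_left l.2
  refine ⟨B + C, (rank_add_le_rank_add_rank B C).trans (add_le_add hB hC), ?_⟩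
  calc froNorm (M - (B + C)) = froNorm ((P - B) + (Q - C)) := by rw [hM, add_sub_add_comm]
    _ ≤ froNorm (P - B) + froNorm (Q - C) := froNorm_add_le _ _
    _ ≤ δ * froNorm P + η * froNorm Q := add_le_add hPB hQC
    _ ≤ δ * froNorm M + η * froNorm M := by
        gcongr
        · exact hM ▸ froNorm_le_froNorm_add_of_posSemidef hP hQ
        · exact hM ▸ add_comm P Q ▸ froNorm_le_froNorm_add_of_posSemidef hQ hP
    _ = (δ + η) * froNorm M := (add_mul _ _ _).symm

end MomentApprox

theorem momentApprox_univ (n : ℕ) [NeZero n] (m : ℕ) :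
    MomentApprox n Set.univ (4 * m * (Nat.log 2 n + 3)) (4 * (1 / 2) ^ m) := by
  have hcover {x : ℝ} (hx : 0 ≤ x) : x ∈ Set.Icc (0 : ℝ) 1 ∪ (Set.Icc 0 1)⁻¹ \ {0} := by
    rcases le_total x 1 with hx1 | hx1
    · exact Or.inl ⟨hx, hx1⟩
    · exact Or.inr ⟨⟨inv_nonneg.mpr hx, inv_le_one_of_one_le₀ hx1⟩, (by positivity : x ≠ 0)⟩
  have hunit := momentApprox_Icc_zero_one n m
  have hnonneg := hunit.union hunit.inv (by positivity) (by positivity)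
  convert hnonneg.union hnonneg.neg (by positivity) (by positivity) using 1
  · exact (Set.eq_univ_of_forall fun x =>
      (le_total 0 x).imp hcover fun hx => hcover (neg_nonneg.mpr hx)).symm
  · ring
  · ring

end MomentApprox

section Parameters

variable {ε : ℝ}

theorem four_mul_half_pow_natCeil_logb_add_two_le (hε : 0 < ε) :
    4 * (1 / 2) ^ (⌈Real.logb 2 (1 / ε)⌉₊ + 2) ≤ ε := by
  set c := ⌈Real.logb 2 (1 / ε)⌉₊
  have hc : 1 / ε ≤ 2 ^ c := by
    rw [← Real.rpow_natCast, ← Real.logb_le_iff_le_rpow one_lt_two (by positivity)]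
    exact Nat.le_ceil _
  calc (4 * (1 / 2) ^ (c + 2) : ℝ) = 1 / 2 ^ c := by
        rw [_root_.one_div_pow, pow_add]
        field_simp
        norm_num
    _ ≤ ε := (one_div_le hε (by positivity)).mp hc

theorem four_mul_natCeil_mul_natLog_le {n : ℕ} (hn : 2 ≤ n) (hε0 : 0 < ε) (hε : ε ≤ 1 / 2) :
    ((4 * (⌈Real.logb 2 (1 / ε)⌉₊ + 2) * (Nat.log 2 n + 3) : ℕ) : ℝ) ≤
      64 / Real.log 2 ^ 2 * Real.log n * Real.log (1 / ε) := by
  have hinv : (2 : ℝ) ≤ 1 / ε := (le_one_div two_pos hε0).mpr hε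
  have hlog_eps : 1 ≤ Real.logb 2 (1 / ε) := by
    rwa [Real.le_logb_iff_rpow_le one_lt_two (by positivity), Real.rpow_one]
  have hlog_n : 1 ≤ Real.logb 2 n := by
    rw [Real.le_logb_iff_rpow_le one_lt_two (by positivity), Real.rpow_one]
    exact_mod_cast hn
  have hceil : (⌈Real.logb 2 (1 / ε)⌉₊ : ℝ) < Real.logb 2 (1 / ε) + 1 :=
    Nat.ceil_lt_add_one (by positivity)
  have hfloor : (Nat.log 2 n : ℝ) ≤ Real.logb 2 n := Real.natLog_le_logb n 2
  push_cast
  calc 4 * ((⌈Real.logb 2 (1 / ε)⌉₊ : ℝ) + 2) * (Nat.log 2 n + 3)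
      ≤ 4 * (4 * Real.logb 2 (1 / ε)) * (4 * Real.logb 2 n) := by gcongr <;> linarith
    _ = 64 / Real.log 2 ^ 2 * Real.log n * Real.log (1 / ε) := by
        simp only [Real.logb]
        ring

end Parameters

/-- (Lemma: implication 1 of Corollary 5.5 of Beckermann–Townsend.)
Since the truncated eigendecomposition `H_k` minimizes the Frobenius norm error over all
matrices of rank at most `k` (Eckart–Young), the conclusion `‖H − H_k‖_F ≤ ε‖H‖_F` is
expressed equivalently as: there exists a matrix `B` of rank at most `k` with
`‖H − B‖_F ≤ ε‖H‖_F`. -/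
theorem posdef_hankel_low_rank_frobenius :
    ∃ C : ℝ, 0 < C ∧
      ∀ (n : ℕ), 2 ≤ n → ∀ ε : ℝ, 0 < ε → ε < 1 / 2 →
        ∀ H : Matrix (Fin n) (Fin n) ℝ, H.PosDef → IsHankel H →
          ∀ k : ℕ, C * Real.log n * Real.log (1 / ε) ≤ (k : ℝ) → k ≤ n →
            ∃ B : Matrix (Fin n) (Fin n) ℝ, B.rank ≤ k ∧
              froNorm (H - B) ≤ ε * froNorm H := by
  refine ⟨64 / Real.log 2 ^ 2, by positivity, fun n hn ε hε0 hε H hpos hHankel k hk _ => ?_⟩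
  have : NeZero n := ⟨by lia⟩
  obtain ⟨w, x, hw, rfl⟩ := hHankel.exists_eq_momentMatrix hpos
  obtain ⟨B, hrank, hB⟩ := momentApprox_univ n (⌈Real.logb 2 (1 / ε)⌉₊ + 2) (Fin n) w x hw
    fun _ => Set.mem_univ _
  refine ⟨B, hrank.trans ?_, hB.trans ?_⟩
  · exact_mod_cast (four_mul_natCeil_mul_natLog_le hn hε0 hε.le).trans hk
  · exact mul_le_mul_of_nonneg_right (four_mul_half_pow_natCeil_logb_add_two_le hε0)
      (froNorm_nonneg _)
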